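/- Let d be a positive integer, let m_1,…,m_d and u_1,…,u_{d−1} be non-negative integers, and set s := (m_1+2, {1}_{u_1}, …, m_{d−1}+2, {1}_{u_{d−1}}, m_d+2) with weight |s| equal to the sum of its components. Let p ∈ (0,1). Then ζ*(s) = Li*_{{1}_{|s|}}( ⊔_{i=1}^{d−1}{1−p, {1}_{m_i}, 1/(1−p), {1}_{u_i}}, 1−p, {1}_{m_d}, 1/(1−p) ) − Li*_{{1}_{|s|}}( ⊔_{i=1}^{d−1}{1−p, {1}_{m_i}, 1/(1−p), {1}_{u_i}}, 1−p, {1}_{m_d+1} ). -/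

import Mathlib

/-- One-dimensional polylogarithm `Li_s(x) = ∑_{n≥1} x^n/n^s`. -/
noncomputable def Li (s : ℕ) (x : ℝ) : ℝ := ∑' n : ℕ, x ^ (n + 1) / (n + 1 : ℝ) ^ s

/-- Multiple polylogarithm
`Li*_{s₁,…,s_d}(x₁,…,x_d) = ∑_{n₁ ≥ ⋯ ≥ n_d ≥ 1} ∏ᵢ xᵢ^{nᵢ}/nᵢ^{sᵢ}`. -/
noncomputable def LiStar (s : List ℕ) (x : List ℝ) : ℝ :=
  ∑' m : {m : Fin s.length → ℕ // (∀ i j : Fin s.length, i ≤ j → m j ≤ m i) ∧ ∀ i, 1 ≤ m i},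
    ∏ i : Fin s.length, x.getD (i : ℕ) 0 ^ m.1 i / (m.1 i : ℝ) ^ s.get i

/-- The exponent tuple `s = (m₁+2, {1}_{u₁}, …, m_d+2, {1}_{u_d}, m_{d+1}+2)`
(here `d+1` plays the role of the paper's `d ≥ 1`). -/
def sTup (d : ℕ) (m : Fin (d + 1) → ℕ) (u : Fin d → ℕ) : List ℕ :=
  (List.ofFn fun i : Fin d => (m i.castSucc + 2) :: List.replicate (u i) 1).flatten ++
    [m (Fin.last d) + 2]

/-- The argument prefix `⊔_{i=1}^{d}{1−p, {1}_{mᵢ}, 1/(1−p), {1}_{uᵢ}}`. -/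
noncomputable def xPre (d : ℕ) (m : Fin (d + 1) → ℕ) (u : Fin d → ℕ) (p : ℝ) : List ℝ :=
  (List.ofFn fun i : Fin d =>
    (1 - p) :: (List.replicate (m i.castSucc) (1 : ℝ) ++
      (1 / (1 - p)) :: List.replicate (u i) (1 : ℝ))).flatten

/-!
Write `q = 1 - p`, let `E` be the Euler mean (the average against the binomial distribution), and
let `(S f)(n) = ∑_{1 ≤ k ≤ n} f(k) / k`, `(D f)(k) = f(k) / k` and `(M f)(k) = qᵏ f(k)`. On
sequences vanishing at `0` one has `S E = E S` and `M S M⁻¹ E = E D`. The block of arguments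
`q, {1}_m, q⁻¹` acts as `S M Sᵐ⁺¹ M⁻¹ = S (M S M⁻¹)ᵐ⁺¹`, so composing it with `E` gives
`S E Dᵐ⁺¹ = E S Dᵐ⁺¹`: moving `E` across the block turns it into the single exponent `m + 2`.

In the difference of the two polylogarithms the last factor becomes `q⁻ᵏ - 1 = q⁻ᵏ (1 - qᵏ)`, where
`1 - qᵏ` is the Euler mean of `1 - 0ᵏ`. Hence the difference of the sums truncated at `n` is the
Euler mean of order `n` of the truncated zeta-star sums, and Euler means preserve limits.
-/

open Finset Filter Topology

section StarSum

variable {R : Type*} [Semiring R]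

/-- The nested sum `∑_{n ≥ k₁ ≥ ⋯ ≥ k_d ≥ 1} w₁(k₁) ⋯ w_d(k_d) f(k_d)` attached to a list of weights
`w₁, …, w_d`, as an operator on the sequence `f`; its value at `f = 1` is the sum proper. -/
def starSum : List (ℕ → R) → (ℕ → R) → ℕ → R
  | [], f => f
  | w :: L, f => fun n => ∑ k ∈ Icc 1 n, w k * starSum L f k

theorem starSum_append (L L' : List (ℕ → R)) (f : ℕ → R) :
    starSum (L ++ L') f = starSum L (starSum L' f) := by
  induction L with
  | nil => rfl
  | cons w L ih => simp only [List.cons_append, starSum, ih]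

theorem starSum_zero_right_of_zero (L : List (ℕ → R)) {f : ℕ → R} (hf : f 0 = 0) :
    starSum L f 0 = 0 := by
  cases L with
  | nil => exact hf
  | cons w L => simp [starSum]

theorem starSum_congr (L : List (ℕ → R)) {f g : ℕ → R} (h : ∀ k, 1 ≤ k → f k = g k)
    {n : ℕ} (hn : 1 ≤ n) : starSum L f n = starSum L g n := by
  induction L generalizing n with
  | nil => exact h n hn
  | cons w L ih => exact sum_congr rfl fun k hk => by rw [ih (mem_Icc.1 hk).1]

theorem starSum_const_mul {R : Type*} [CommSemiring R] (L : List (ℕ → R)) (c : R) (f : ℕ → R)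
    (n : ℕ) :
    starSum L (fun k => c * f k) n = c * starSum L f n := by
  induction L generalizing n with
  | nil => rfl
  | cons w L ih => simp only [starSum, ih, mul_sum, mul_left_comm]

theorem starSum_sub {R : Type*} [Ring R] (L : List (ℕ → R)) (f g : ℕ → R) (n : ℕ) :
    starSum L (fun k => f k - g k) n = starSum L f n - starSum L g n := by
  induction L generalizing n with
  | nil => rfl
  | cons w L ih => simp only [starSum, ih, mul_sub, sum_sub_distrib]

variable [PartialOrder R] [IsOrderedRing R]

theorem starSum_mono {L : List (ℕ → R)} (hL : ∀ w ∈ L, 0 ≤ w) {f g : ℕ → R}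
    (h : ∀ k, 1 ≤ k → f k ≤ g k) {n : ℕ} (hn : 1 ≤ n) : starSum L f n ≤ starSum L g n := by
  induction L generalizing n with
  | nil => exact h n hn
  | cons w L ih =>
    rw [List.forall_mem_cons] at hL
    exact sum_le_sum fun k hk => mul_le_mul_of_nonneg_left (ih hL.2 (mem_Icc.1 hk).1) (hL.1 k)

theorem starSum_nonneg {L : List (ℕ → R)} (hL : ∀ w ∈ L, 0 ≤ w) {f : ℕ → R} (hf : 0 ≤ f) :
    0 ≤ starSum L f := by
  induction L with
  | nil => exact hf
  | cons w L ih =>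
    rw [List.forall_mem_cons] at hL
    exact fun n => sum_nonneg fun k _ => mul_nonneg (hL.1 k) (ih hL.2 k)

theorem monotone_starSum_one {L : List (ℕ → R)} (hL : ∀ w ∈ L, 0 ≤ w) :
    Monotone (starSum L 1) := by
  cases L with
  | nil => exact monotone_const
  | cons w L =>
    rw [List.forall_mem_cons] at hL
    intro a b hab
    exact sum_le_sum_of_subset_of_nonneg (Icc_subset_Icc_right hab)
      fun k _ _ => mul_nonneg (hL.1 k) (starSum_nonneg hL.2 zero_le_one k)

end StarSum

theorem exists_tendsto_starSum_one {L : List (ℕ → ℝ)} (hL : ∀ w ∈ L, 0 ≤ w) {C : ℝ}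
    (hC : ∀ᶠ n in atTop, starSum L 1 n ≤ C) : ∃ ℓ, Tendsto (starSum L 1) atTop (𝓝 ℓ) := by
  have hmono := monotone_starSum_one hL
  have hbdd : BddAbove (Set.range (starSum L 1)) := by
    refine ⟨C, ?_⟩
    rintro _ ⟨n, rfl⟩
    obtain ⟨N, hN, hnN⟩ := (hC.and (eventually_ge_atTop n)).exists
    exact (hmono hnN).trans hN
  exact ⟨_, tendsto_atTop_ciSup hmono hbdd⟩

section AntitoneTuples

/-- The tuples `n ≥ m₁ ≥ ⋯ ≥ m_d ≥ 1`, over which the truncated multiple polylogarithms sum. -/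
def boundedAntitone (d n : ℕ) : Finset (Fin d → ℕ) :=
  open Classical in {m ∈ Fintype.piFinset fun _ => Icc 1 n | Antitone m}

theorem mem_boundedAntitone {d n : ℕ} {m : Fin d → ℕ} :
    m ∈ boundedAntitone d n ↔ (∀ i, 1 ≤ m i ∧ m i ≤ n) ∧ Antitone m := by
  simp [boundedAntitone]

theorem antitone_cons_iff {α : Type*} [Preorder α] {d : ℕ} {a : α} {t : Fin d → α} :
    Antitone (Fin.cons a t : Fin (d + 1) → α) ↔ (∀ i, t i ≤ a) ∧ Antitone t := by
  simp only [antitone_iff_forall_lt, Fin.forall_fin_succ]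
  simp

theorem cons_mem_boundedAntitone {d n a : ℕ} {t : Fin d → ℕ} :
    (Fin.cons a t : Fin (d + 1) → ℕ) ∈ boundedAntitone (d + 1) n ↔
      a ∈ Icc 1 n ∧ t ∈ boundedAntitone d a := by
  simp only [mem_boundedAntitone, antitone_cons_iff, Fin.forall_fin_succ, Fin.cons_zero,
    Fin.cons_succ, mem_Icc]
  constructor
  · rintro ⟨⟨ha, ht⟩, hta, hanti⟩
    exact ⟨ha, fun i => ⟨(ht i).1, hta i⟩, hanti⟩
  · rintro ⟨ha, ht, hanti⟩
    exact ⟨⟨ha, fun i => ⟨(ht i).1, (ht i).2.trans ha.2⟩⟩, fun i => (ht i).2, hanti⟩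

theorem sum_boundedAntitone_succ {M : Type*} [AddCommMonoid M] (d n : ℕ)
    (g : (Fin (d + 1) → ℕ) → M) :
    ∑ m ∈ boundedAntitone (d + 1) n, g m =
      ∑ a ∈ Icc 1 n, ∑ t ∈ boundedAntitone d a, g (Fin.cons a t) := by
  rw [sum_sigma']
  symm
  refine sum_bij' (fun x _ => Fin.cons x.1 x.2) (fun m _ => ⟨m 0, Fin.tail m⟩) ?_ ?_ ?_ ?_ ?_
  · simp [cons_mem_boundedAntitone]
  · intro m hm
    rw [← Fin.cons_self_tail m, cons_mem_boundedAntitone] at hm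
    exact mem_sigma.2 hm
  · simp
  · simp
  · simp

theorem sum_boundedAntitone_prod {R : Type*} [CommSemiring R] {d : ℕ} (w : Fin d → ℕ → R) (n : ℕ) :
    ∑ m ∈ boundedAntitone d n, ∏ i, w i (m i) = starSum (List.ofFn w) 1 n := by
  induction d generalizing n with
  | zero => simp [boundedAntitone, starSum, Subsingleton.antitone]
  | succ d ih =>
    simp only [sum_boundedAntitone_succ, Fin.prod_univ_succ, Fin.cons_zero, Fin.cons_succ,
      ← mul_sum, ih, List.ofFn_succ, starSum]

end AntitoneTuples

theorem hasSum_of_tendsto_sum_of_nonneg {ι : Type*} {f : ι → ℝ} (hf : 0 ≤ f) {S : ℕ → Finset ι}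
    (hS : Tendsto S atTop atTop) {ℓ : ℝ} (h : Tendsto (fun n => ∑ i ∈ S n, f i) atTop (𝓝 ℓ)) :
    HasSum f ℓ :=
  (tendsto_iff_tendsto_subseq_of_monotone (sum_mono_set_of_nonneg hf) hS).2 h

section PolylogWeight

variable {K : Type*} [Field K]

/-- The weight `k ↦ x ^ k / k ^ s` that an argument `x` with exponent `s` contributes to a multiple
polylogarithm. -/
def polylogWeight (s : ℕ) (x : K) (k : ℕ) : K := x ^ k / (k : K) ^ s

theorem polylogWeight_nonneg (s : ℕ) {x : ℝ} (hx : 0 ≤ x) : 0 ≤ polylogWeight s x := fun _ => by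
  unfold polylogWeight
  positivity

theorem polylogWeight_one_anti_left {s t : ℕ} (hst : s ≤ t) {k : ℕ} (hk : 1 ≤ k) :
    polylogWeight t (1 : ℝ) k ≤ polylogWeight s 1 k := by
  unfold polylogWeight
  gcongr
  exact_mod_cast hk

end PolylogWeight

theorem LiStar_eq_of_tendsto {s : List ℕ} {x : List ℝ} (hlen : s.length = x.length)
    (hx : ∀ y ∈ x, 0 ≤ y) {ℓ : ℝ}
    (h : Tendsto (starSum (List.zipWith polylogWeight s x) 1) atTop (𝓝 ℓ)) : LiStar s x = ℓ := by
  set w : Fin s.length → ℕ → ℝ := fun i => polylogWeight (s.get i) (x.getD i 0)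
  have hw : List.zipWith polylogWeight s x = List.ofFn w :=
    List.ext_getElem (by simp [hlen]) fun i hi _ => by
      have hix : i < x.length := by
        simp only [List.length_zipWith] at hi
        omega
      simp [w, hix]
  have hw_nonneg (i) : 0 ≤ w i :=
    polylogWeight_nonneg _ (by simp [← hlen, hx])
  set P : (Fin s.length → ℕ) → Prop := fun m => (∀ i j, i ≤ j → m j ≤ m i) ∧ ∀ i, 1 ≤ m i
  have hP {n m} (hm : m ∈ boundedAntitone s.length n) : P m :=
    ⟨fun _ _ hij => (mem_boundedAntitone.1 hm).2 hij, fun i => ((mem_boundedAntitone.1 hm).1 i).1⟩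
  classical
  have hexhaust : Tendsto (fun n => (boundedAntitone s.length n).subtype P) atTop atTop := by
    refine tendsto_atTop_finset_of_monotone (fun a b hab => subtype_mono fun m hm => ?_) fun m => ?_
    · rw [mem_boundedAntitone] at hm ⊢
      exact ⟨fun i => ⟨(hm.1 i).1, (hm.1 i).2.trans hab⟩, hm.2⟩
    · refine ⟨∑ i, m.1 i, mem_subtype.2 (mem_boundedAntitone.2 ⟨fun i => ⟨m.2.2 i, ?_⟩, ?_⟩)⟩
      · exact single_le_sum_of_canonicallyOrdered (mem_univ i)
      · exact fun i j hij => m.2.1 i j hij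
  refine (hasSum_of_tendsto_sum_of_nonneg (fun m => prod_nonneg fun i _ => hw_nonneg i _) hexhaust
    ?_).tsum_eq
  refine h.congr fun n => ?_
  rw [hw, ← sum_boundedAntitone_prod]
  exact (sum_subtype_of_mem (fun m => ∏ i, w i (m i)) fun _ => hP).symm

section EulerMean

variable {R : Type*} [CommRing R]

/-- The Euler mean of order `n` of a sequence `f`: its average against the binomial distribution
with parameters `n` and `p`. -/
def eulerMean (p : R) (f : ℕ → R) (n : ℕ) : R :=
  ∑ ij ∈ antidiagonal n, (n.choose ij.1 : R) * (p ^ ij.1 * (1 - p) ^ ij.2 * f ij.1)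

theorem eulerMean_eq_sum_range (p : R) (f : ℕ → R) (n : ℕ) :
    eulerMean p f n =
      ∑ k ∈ range (n + 1), (n.choose k : R) * (p ^ k * (1 - p) ^ (n - k)) * f k := by
  simp only [eulerMean, Finset.Nat.sum_antidiagonal_eq_sum_range_succ_mk, mul_assoc]

theorem eulerMean_zero_right (p : R) (f : ℕ → R) : eulerMean p f 0 = f 0 := by
  simp [eulerMean]

theorem eulerMean_add (p : R) (f g : ℕ → R) (n : ℕ) :
    eulerMean p (fun k => f k + g k) n = eulerMean p f n + eulerMean p g n := by
  simp only [eulerMean, mul_add, sum_add_distrib]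

theorem eulerMean_const (p c : R) (n : ℕ) : eulerMean p (fun _ => c) n = c := by
  calc eulerMean p (fun _ => c) n = (p + (1 - p)) ^ n * c := by
        simp only [eulerMean, (Commute.all p (1 - p)).add_pow', sum_mul, nsmul_eq_mul, mul_assoc]
    _ = c := by simp

theorem eulerMean_succ (p : R) (f : ℕ → R) (n : ℕ) :
    eulerMean p f (n + 1) = (1 - p) * eulerMean p f n + p * eulerMean p (fun k => f (k + 1)) n := by
  rw [eulerMean, sum_antidiagonal_choose_succ_mul fun i j => p ^ i * (1 - p) ^ j * f i]
  simp only [eulerMean, mul_sum]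
  congr 1
  · exact sum_congr rfl fun _ _ => by ring
  · refine sum_congr rfl fun ij hij => ?_
    rw [Nat.choose_symm_of_eq_add (mem_antidiagonal.1 hij).symm]
    ring

theorem eulerMean_one_sub_zero_pow (p : R) (n : ℕ) :
    eulerMean p (fun k => 1 - 0 ^ k) n = 1 - (1 - p) ^ n := by
  induction n with
  | zero => simp [eulerMean_zero_right]
  | succ n ih =>
    rw [eulerMean_succ, ih]
    simp only [pow_succ, mul_zero, sub_zero, eulerMean_const]
    ring

theorem eulerMean_mono {p : ℝ} (hp : p ∈ Set.Icc (0 : ℝ) 1) {f g : ℕ → ℝ} (h : f ≤ g) (n : ℕ) :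
    eulerMean p f n ≤ eulerMean p g n := by
  have hp0 := hp.1
  have hq0 := sub_nonneg.2 hp.2
  unfold eulerMean
  gcongr
  exact h _

variable {K : Type*} [Field K]

theorem eulerMean_succ_div [CharZero K] (p : K) {f : ℕ → K} (hf : f 0 = 0) (n : ℕ) :
    eulerMean p f (n + 1) / (n + 1 : ℕ) =
      p * eulerMean p (fun k => f (k + 1) / (k + 1 : ℕ)) n := by
  rw [eulerMean, Finset.Nat.sum_antidiagonal_succ, hf, mul_zero, mul_zero, zero_add, sum_div,
    eulerMean, mul_sum]
  refine sum_congr rfl fun ⟨i, j⟩ _ => ?_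
  have habsorb : ((n + 1 : ℕ) : K) * n.choose i = (n + 1).choose (i + 1) * (i + 1 : ℕ) := by
    exact_mod_cast Nat.add_one_mul_choose_eq n i
  have hn : ((n + 1 : ℕ) : K) ≠ 0 := Nat.cast_ne_zero.2 n.succ_ne_zero
  have hi : ((i + 1 : ℕ) : K) ≠ 0 := Nat.cast_ne_zero.2 i.succ_ne_zero
  field_simp
  linear_combination (-(p ^ (i + 1) * (1 - p) ^ j * f (i + 1))) * habsorb

/-- The operator sending `f` to the sequence of partial sums of `∑ f(k) / k`. -/
def harmonicSum (f : ℕ → K) (n : ℕ) : K := ∑ k ∈ Icc 1 n, f k / k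

theorem harmonicSum_succ (f : ℕ → K) (n : ℕ) :
    harmonicSum f (n + 1) = harmonicSum f n + f (n + 1) / (n + 1 : ℕ) :=
  sum_Icc_succ_top (by omega) _

theorem harmonicSum_eulerMean [CharZero K] (p : K) {f : ℕ → K} (hf : f 0 = 0) (n : ℕ) :
    harmonicSum (eulerMean p f) n = eulerMean p (harmonicSum f) n := by
  induction n with
  | zero => simp [harmonicSum, eulerMean_zero_right]
  | succ n ih =>
    rw [harmonicSum_succ, ih, eulerMean_succ_div p hf, eulerMean_succ]
    simp only [harmonicSum_succ, eulerMean_add]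
    ring

theorem pow_mul_harmonicSum_eulerMean [CharZero K] {p : K} (hp : 1 - p ≠ 0) {f : ℕ → K}
    (hf : f 0 = 0) (n : ℕ) :
    (1 - p) ^ n * harmonicSum (fun k => (1 / (1 - p)) ^ k * eulerMean p f k) n =
      eulerMean p (fun k => f k / k) n := by
  induction n with
  | zero => simp [harmonicSum, eulerMean_zero_right]
  | succ n ih =>
    rw [harmonicSum_succ, eulerMean_succ p fun k => f k / k, ← ih, ← eulerMean_succ_div p hf,
      one_div, inv_pow]
    field_simp
    ring

theorem starSum_polylogWeight_one_cons (x : K) (L : List (ℕ → K)) (f : ℕ → K) :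
    starSum (polylogWeight 1 x :: L) f = harmonicSum fun k => x ^ k * starSum L f k := by
  funext n
  exact sum_congr rfl fun k _ => by rw [polylogWeight, pow_one]; ring

theorem starSum_polylogWeight_succ_one (m : ℕ) (f : ℕ → K) :
    starSum [polylogWeight (m + 1) 1] f = harmonicSum fun k => f k / k ^ m := by
  funext n
  exact sum_congr rfl fun k _ => by rw [polylogWeight, starSum]; ring

theorem starSum_append_one_div_pow {x : K} (hx : x ≠ 0) (L : List (ℕ → K)) :
    starSum (L ++ [polylogWeight 1 (1 / x)]) (fun k => x ^ k) =
      starSum (L ++ [polylogWeight 1 1]) 1 := by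
  simp only [starSum_append, starSum_polylogWeight_one_cons]
  congr! 3 with k
  simp [starSum, hx]

theorem pow_mul_starSum_replicate [CharZero K] {p : K} (hp : 1 - p ≠ 0) {f : ℕ → K}
    (hf : f 0 = 0) (m n : ℕ) :
    (1 - p) ^ n * starSum (List.replicate m (polylogWeight 1 1) ++ [polylogWeight 1 (1 / (1 - p))])
      (eulerMean p f) n = eulerMean p (fun k => f k / k ^ (m + 1)) n := by
  induction m generalizing n with
  | zero =>
    simpa [starSum_polylogWeight_one_cons, starSum] using pow_mul_harmonicSum_eulerMean hp hf n
  | succ m ih =>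
    have hconj : starSum (List.replicate m (polylogWeight 1 1) ++ [polylogWeight 1 (1 / (1 - p))])
        (eulerMean p f) =
        fun k => (1 / (1 - p)) ^ k * eulerMean p (fun j => f j / j ^ (m + 1)) k := by
      funext k
      rw [← ih, one_div, inv_pow, inv_mul_cancel_left₀ (pow_ne_zero k hp)]
    simp only [List.replicate_succ, List.cons_append, starSum_polylogWeight_one_cons, one_pow,
      one_mul, hconj]
    rw [pow_mul_harmonicSum_eulerMean hp (by simp)]
    simp only [div_div, ← pow_succ]

/-- The weights `A` and `B` are intertwined if `starSum A ∘ E = E ∘ starSum B` on sequences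
vanishing at `0`, where `E` is the Euler mean; it fails for constant sequences even when
`A = B = [polylogWeight 1 1]`. -/
def EulerIntertwined (p : K) (A B : List (ℕ → K)) : Prop :=
  ∀ f : ℕ → K, f 0 = 0 → starSum A (eulerMean p f) = eulerMean p (starSum B f)

namespace EulerIntertwined

variable {p : K}

theorem nil : EulerIntertwined p [] [] := fun _ _ => rfl

theorem append {A A' B B' : List (ℕ → K)} (h : EulerIntertwined p A B)
    (h' : EulerIntertwined p A' B') : EulerIntertwined p (A ++ A') (B ++ B') := fun f hf => by
  rw [starSum_append, starSum_append, h' f hf, h _ (starSum_zero_right_of_zero B' hf)]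

theorem flatten_ofFn {d : ℕ} {A B : Fin d → List (ℕ → K)}
    (h : ∀ i, EulerIntertwined p (A i) (B i)) :
    EulerIntertwined p (List.ofFn A).flatten (List.ofFn B).flatten := by
  induction d with
  | zero => simpa using nil
  | succ d ih =>
    simpa [List.ofFn_succ] using (h 0).append (ih fun i => h i.succ)

variable [CharZero K]

theorem replicate_one (u : ℕ) :
    EulerIntertwined p (List.replicate u (polylogWeight 1 1))
      (List.replicate u (polylogWeight 1 1)) := by
  induction u with
  | zero => exact nil
  | succ u ih =>
    have hone : EulerIntertwined p [polylogWeight 1 1] [polylogWeight 1 1] := fun f hf => by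
      funext n
      simp only [starSum_polylogWeight_one_cons, one_pow, one_mul]
      exact harmonicSum_eulerMean p hf n
    simpa [List.replicate_succ] using hone.append ih

theorem block (hp : 1 - p ≠ 0) (m : ℕ) :
    EulerIntertwined p
      (polylogWeight 1 (1 - p) ::
        (List.replicate m (polylogWeight 1 1) ++ [polylogWeight 1 (1 / (1 - p))]))
      [polylogWeight (m + 2) 1] := fun f hf => by
  funext n
  simp only [starSum_polylogWeight_one_cons, pow_mul_starSum_replicate hp hf,
    starSum_polylogWeight_succ_one]
  exact harmonicSum_eulerMean p (by simp) n

end EulerIntertwined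

end EulerMean

theorem tendsto_choose_mul_pow_mul_pow {p : ℝ} (hp : p ∈ Set.Ioc (0 : ℝ) 1) (k : ℕ) :
    Tendsto (fun n : ℕ => (n.choose k : ℝ) * (p ^ k * (1 - p) ^ (n - k))) atTop (𝓝 0) := by
  have hnorm : ‖1 - p‖ < 1 := by
    rw [Real.norm_eq_abs, abs_lt]
    constructor <;> linarith [hp.1, hp.2]
  rw [← tendsto_add_atTop_iff_nat k]
  have h := (summable_choose_mul_geometric_of_norm_lt_one k hnorm).tendsto_atTop_zero
  simpa [mul_left_comm] using h.const_mul (p ^ k)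

theorem tendsto_eulerMean_of_eventually_zero {p : ℝ} (hp : p ∈ Set.Ioc (0 : ℝ) 1) {f : ℕ → ℝ}
    {N : ℕ} (hf : ∀ k, N ≤ k → f k = 0) : Tendsto (eulerMean p f) atTop (𝓝 0) := by
  have hhead : Tendsto (fun n : ℕ =>
      ∑ k ∈ range N, (n.choose k : ℝ) * (p ^ k * (1 - p) ^ (n - k)) * f k) atTop (𝓝 0) := by
    simpa using tendsto_finsetSum (range N) fun k _ =>
      (tendsto_choose_mul_pow_mul_pow hp k).mul_const (f k)
  refine hhead.congr' ?_
  filter_upwards [eventually_ge_atTop N] with n hn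
  rw [eulerMean_eq_sum_range]
  refine sum_subset (range_subset_range.2 (by omega)) fun k _ hk => ?_
  rw [hf k (by simpa using hk), mul_zero]

theorem tendsto_eulerMean {p : ℝ} (hp : p ∈ Set.Ioc (0 : ℝ) 1) {f : ℕ → ℝ} {ℓ : ℝ}
    (hf : Tendsto f atTop (𝓝 ℓ)) : Tendsto (eulerMean p f) atTop (𝓝 ℓ) := by
  refine Metric.tendsto_nhds.2 fun ε hε => ?_
  obtain ⟨N, hN⟩ := Metric.tendsto_atTop.1 hf (ε / 2) (half_pos hε)
  set head : ℕ → ℝ := fun k => if k < N then |f k - ℓ| else 0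
  have hhead : Tendsto (eulerMean p head) atTop (𝓝 0) :=
    tendsto_eulerMean_of_eventually_zero hp (N := N) fun k hk => if_neg hk.not_gt
  have hclose (k) : |f k - ℓ| ≤ ε / 2 + head k := by
    by_cases hk : k < N
    · simp only [head, if_pos hk]
      linarith
    · simpa [head, hk, Real.dist_eq] using (hN k (not_lt.1 hk)).le
  filter_upwards [hhead.eventually_lt_const (half_pos hε)] with n hn
  have hupper : eulerMean p f n ≤ ℓ + ε / 2 + eulerMean p head n := by
    rw [← eulerMean_const p (ℓ + ε / 2) n, ← eulerMean_add]
    exact eulerMean_mono (Set.Ioc_subset_Icc_self hp) (fun k => by linarith [abs_le.1 (hclose k)]) n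
  have hlower : ℓ - ε / 2 ≤ eulerMean p f n + eulerMean p head n := by
    rw [← eulerMean_const p (ℓ - ε / 2) n, ← eulerMean_add]
    exact eulerMean_mono (Set.Ioc_subset_Icc_self hp) (fun k => by linarith [abs_le.1 (hclose k)]) n
  rw [Real.dist_eq, abs_lt]
  constructor <;> linarith

section Convergence

theorem sum_one_div_sqrt_le (n : ℕ) : ∑ k ∈ Icc 1 n, 1 / √(k : ℝ) ≤ 2 * √(n : ℝ) := by
  induction n with
  | zero => simp
  | succ n ih =>
    have hpos : 0 < √((n + 1 : ℕ) : ℝ) := by positivity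
    have hsq := Real.sq_sqrt (Nat.cast_nonneg (α := ℝ) n)
    have hsq' := Real.sq_sqrt (Nat.cast_nonneg (α := ℝ) (n + 1))
    have hstep : 1 / √((n + 1 : ℕ) : ℝ) ≤ 2 * √((n + 1 : ℕ) : ℝ) - 2 * √(n : ℝ) := by
      rw [div_le_iff₀ hpos]
      push_cast at *
      nlinarith [sq_nonneg (√((n : ℝ) + 1) - √(n : ℝ))]
    rw [sum_Icc_succ_top (by omega)]
    linarith

theorem polylogWeight_one_map_nonneg (s : List ℕ) :
    ∀ w ∈ s.map fun i => polylogWeight i (1 : ℝ), 0 ≤ w := by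
  rw [List.forall_mem_map]
  exact fun i _ => polylogWeight_nonneg i zero_le_one

theorem starSum_polylogWeight_one_le_sqrt {s : List ℕ} (hs : ∀ i ∈ s, 1 ≤ i) {n : ℕ} (hn : 1 ≤ n) :
    starSum (s.map fun i => polylogWeight i (1 : ℝ)) 1 n ≤ 2 ^ s.length * √n := by
  induction s generalizing n with
  | nil => simpa [starSum] using hn
  | cons i s ih =>
    rw [List.forall_mem_cons] at hs
    have hterm : ∀ k ∈ Icc 1 n,
        polylogWeight i (1 : ℝ) k * starSum (s.map fun i => polylogWeight i (1 : ℝ)) 1 k ≤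
          2 ^ s.length * (1 / √k) := fun k hk => by
      have hk1 := (mem_Icc.1 hk).1
      calc _ ≤ polylogWeight 1 (1 : ℝ) k * (2 ^ s.length * √k) :=
            mul_le_mul (polylogWeight_one_anti_left hs.1 hk1) (ih hs.2 hk1)
              (starSum_nonneg (polylogWeight_one_map_nonneg s) zero_le_one k)
              (polylogWeight_nonneg 1 zero_le_one k)
        _ = 2 ^ s.length * (1 / √k) := by
            rw [polylogWeight, one_pow, pow_one, ← Real.sqrt_div_self']
            ring
    calc _ ≤ ∑ k ∈ Icc 1 n, 2 ^ s.length * (1 / √(k : ℝ)) := sum_le_sum hterm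
      _ ≤ 2 ^ s.length * (2 * √n) := by
          rw [← mul_sum]
          gcongr
          exact sum_one_div_sqrt_le n
      _ = _ := by rw [List.length_cons, pow_succ, mul_assoc]

theorem exists_tendsto_starSum_polylogWeight_one {s : List ℕ} (hhead : 2 ≤ s.headI)
    (hs : ∀ i ∈ s, 1 ≤ i) :
    ∃ ℓ, Tendsto (starSum (s.map fun i => polylogWeight i (1 : ℝ)) 1) atTop (𝓝 ℓ) := by
  obtain ⟨i, s, rfl⟩ := List.exists_cons_of_ne_nil (show s ≠ [] by
    rintro rfl
    simp at hhead)
  rw [List.headI_cons] at hhead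
  rw [List.forall_mem_cons] at hs
  have hsummable : Summable fun k : ℕ => 2 ^ s.length * (1 / (k : ℝ) ^ (3 / 2 : ℝ)) :=
    (Real.summable_one_div_nat_rpow.2 (by norm_num)).mul_left _
  have hterm : ∀ k, 1 ≤ k →
      polylogWeight i (1 : ℝ) k * starSum (s.map fun i => polylogWeight i (1 : ℝ)) 1 k ≤
        2 ^ s.length * (1 / (k : ℝ) ^ (3 / 2 : ℝ)) := fun k hk => by
    have hpos : (0 : ℝ) < k := by exact_mod_cast hk
    calc _ ≤ polylogWeight 2 (1 : ℝ) k * (2 ^ s.length * √k) :=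
          mul_le_mul (polylogWeight_one_anti_left hhead hk)
            (starSum_polylogWeight_one_le_sqrt hs.2 hk)
            (starSum_nonneg (polylogWeight_one_map_nonneg s) zero_le_one k)
            (polylogWeight_nonneg 2 zero_le_one k)
      _ = 2 ^ s.length * ((k : ℝ) ^ (1 / 2 : ℝ) / (k : ℝ) ^ (2 : ℝ)) := by
          rw [polylogWeight, one_pow, Real.sqrt_eq_rpow, Real.rpow_two]
          ring
      _ = _ := by
          rw [← Real.rpow_sub hpos, one_div ((k : ℝ) ^ _), ← Real.rpow_neg hpos.le]
          norm_num
  exact exists_tendsto_starSum_one (polylogWeight_one_map_nonneg _) <| Eventually.of_forall fun n =>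
    (sum_le_sum fun k hk => hterm k (mem_Icc.1 hk).1).trans
      (hsummable.sum_le_tsum (Icc 1 n) fun k _ => by positivity)

end Convergence

-- `1 - 0 ^ k` is the constant `1` corrected to vanish at `0`, where intertwining applies.
theorem starSum_sub_starSum_eq_eulerMean {K : Type*} [Field K] {p : K} (hp : 1 - p ≠ 0)
    {L S : List (ℕ → K)} (h : EulerIntertwined p (L ++ [polylogWeight 1 (1 / (1 - p))]) S) (n : ℕ) :
    starSum (L ++ [polylogWeight 1 (1 / (1 - p))]) 1 n - starSum (L ++ [polylogWeight 1 1]) 1 n =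
      eulerMean p (starSum S fun k => 1 - 0 ^ k) n := by
  rw [← h _ (by simp), ← starSum_append_one_div_pow hp, ← starSum_sub]
  congr 1
  funext k
  exact (eulerMean_one_sub_zero_pow p k).symm

-- Only the difference is controlled by Euler means; this bound makes each of the two sums converge.
theorem mul_starSum_one_le_sub {p : ℝ} (hp : p ∈ Set.Ioo (0 : ℝ) 1) {L : List (ℕ → ℝ)}
    (hL : ∀ w ∈ L, 0 ≤ w) {n : ℕ} (hn : 1 ≤ n) :
    p * starSum (L ++ [polylogWeight 1 (1 / (1 - p))]) 1 n ≤
      starSum (L ++ [polylogWeight 1 (1 / (1 - p))]) 1 n -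
        starSum (L ++ [polylogWeight 1 1]) 1 n := by
  have hq : 0 < 1 - p := sub_pos.2 hp.2
  have hnonneg : ∀ w ∈ L ++ [polylogWeight 1 (1 / (1 - p))], 0 ≤ w :=
    List.forall_mem_append.2
      ⟨hL, List.forall_mem_singleton.2 (polylogWeight_nonneg 1 (one_div_pos.2 hq).le)⟩
  rw [← starSum_append_one_div_pow hq.ne', ← starSum_const_mul, ← starSum_sub]
  refine starSum_mono hnonneg (fun k hk => ?_) hn
  have hpow : (1 - p) ^ k ≤ 1 - p :=
    pow_le_of_le_one hq.le (by linarith [hp.1]) (Nat.one_le_iff_ne_zero.1 hk)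
  simp only [Pi.one_apply]
  linarith

theorem exists_tendsto_starSum_of_eulerIntertwined {p : ℝ} (hp : p ∈ Set.Ioo (0 : ℝ) 1)
    {L S : List (ℕ → ℝ)} (hL : ∀ w ∈ L, 0 ≤ w)
    (h : EulerIntertwined p (L ++ [polylogWeight 1 (1 / (1 - p))]) S) {z : ℝ}
    (hz : Tendsto (starSum S 1) atTop (𝓝 z)) :
    ∃ ℓ, Tendsto (starSum (L ++ [polylogWeight 1 (1 / (1 - p))]) 1) atTop (𝓝 ℓ) ∧
      Tendsto (starSum (L ++ [polylogWeight 1 1]) 1) atTop (𝓝 (ℓ - z)) := by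
  have hq : 0 < 1 - p := sub_pos.2 hp.2
  have hz' : Tendsto (starSum S fun k => 1 - 0 ^ k) atTop (𝓝 z) := by
    refine hz.congr' ?_
    filter_upwards [eventually_ge_atTop 1] with n hn
    exact starSum_congr S (fun k hk => by simp [Nat.one_le_iff_ne_zero.1 hk]) hn
  have hdiff : Tendsto (fun n => starSum (L ++ [polylogWeight 1 (1 / (1 - p))]) 1 n -
      starSum (L ++ [polylogWeight 1 1]) 1 n) atTop (𝓝 z) := by
    simpa only [starSum_sub_starSum_eq_eulerMean hq.ne' h] using
      tendsto_eulerMean (Set.Ioo_subset_Ioc_self hp) hz'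
  have hbdd : ∀ᶠ n in atTop,
      starSum (L ++ [polylogWeight 1 (1 / (1 - p))]) 1 n ≤ (z + 1) / p := by
    filter_upwards [hdiff.eventually_le_const (lt_add_one z), eventually_ge_atTop 1] with n hzn hn
    rw [le_div_iff₀' hp.1]
    exact (mul_starSum_one_le_sub hp hL hn).trans hzn
  obtain ⟨ℓ, hℓ⟩ := exists_tendsto_starSum_one (List.forall_mem_append.2
    ⟨hL, List.forall_mem_singleton.2 (polylogWeight_nonneg 1 (one_div_pos.2 hq).le)⟩) hbdd
  exact ⟨ℓ, hℓ, by simpa using hℓ.sub hdiff⟩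

theorem zipWith_polylogWeight_one_right (s : List ℕ) :
    List.zipWith polylogWeight s (List.replicate s.length (1 : ℝ)) =
      s.map fun i => polylogWeight i 1 := by
  induction s with
  | nil => rfl
  | cons i s ih => simp [List.replicate_succ, ih]

theorem zipWith_polylogWeight_one_left (x : List ℝ) :
    List.zipWith polylogWeight (List.replicate x.length 1) x = x.map (polylogWeight 1) := by
  induction x with
  | nil => rfl
  | cons y x ih => simp [List.replicate_succ, ih]

theorem LiStar_sub_LiStar_of_eulerIntertwined {p : ℝ} (hp : p ∈ Set.Ioo (0 : ℝ) 1) {x : List ℝ}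
    (hx : ∀ y ∈ x, 0 ≤ y) {s : List ℕ} (hhead : 2 ≤ s.headI) (hs : ∀ i ∈ s, 1 ≤ i)
    (h : EulerIntertwined p ((x ++ [1 / (1 - p)]).map (polylogWeight 1))
      (s.map fun i => polylogWeight i 1)) :
    LiStar (List.replicate (x.length + 1) 1) (x ++ [1 / (1 - p)]) -
        LiStar (List.replicate (x.length + 1) 1) (x ++ [1]) =
      LiStar s (List.replicate s.length 1) := by
  have hLiStar (c : ℝ) (hc : 0 ≤ c) {ℓ : ℝ}
      (hℓ : Tendsto (starSum (x.map (polylogWeight 1) ++ [polylogWeight 1 c]) 1) atTop (𝓝 ℓ)) :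
      LiStar (List.replicate (x.length + 1) 1) (x ++ [c]) = ℓ := by
    have hlen : x.length + 1 = (x ++ [c]).length := by simp
    rw [hlen]
    refine LiStar_eq_of_tendsto (by simp)
      (List.forall_mem_append.2 ⟨hx, List.forall_mem_singleton.2 hc⟩) ?_
    rw [zipWith_polylogWeight_one_left]
    simpa using hℓ
  obtain ⟨z, hz⟩ := exists_tendsto_starSum_polylogWeight_one hhead hs
  obtain ⟨ℓ, hℓ, hℓz⟩ := exists_tendsto_starSum_of_eulerIntertwined hp
    (L := x.map (polylogWeight 1))
    (List.forall_mem_map.2 fun y hy => polylogWeight_nonneg 1 (hx y hy)) (by simpa using h) hz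
  rw [hLiStar _ (one_div_pos.2 (sub_pos.2 hp.2)).le hℓ, hLiStar 1 zero_le_one hℓz, sub_sub_cancel,
    LiStar_eq_of_tendsto (by simp) (by simp) (by rwa [zipWith_polylogWeight_one_right])]

theorem eulerIntertwined_xPre_sTup (d : ℕ) (m : Fin (d + 1) → ℕ) (u : Fin d → ℕ) {p : ℝ}
    (hp : 1 - p ≠ 0) :
    EulerIntertwined p
      ((xPre d m u p ++ (1 - p) :: (List.replicate (m (Fin.last d)) 1 ++ [1 / (1 - p)])).map
        (polylogWeight 1))
      ((sTup d m u).map fun i => polylogWeight i 1) := by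
  have hprefix := EulerIntertwined.flatten_ofFn fun i : Fin d =>
    (EulerIntertwined.block hp (m i.castSucc)).append (EulerIntertwined.replicate_one (u i))
  simpa [xPre, sTup, List.map_flatten, Function.comp_def] using
    hprefix.append (EulerIntertwined.block hp (m (Fin.last d)))

theorem one_le_of_mem_sTup (d : ℕ) (m : Fin (d + 1) → ℕ) (u : Fin d → ℕ) :
    ∀ i ∈ sTup d m u, 1 ≤ i := by
  simp only [sTup, List.mem_append, List.mem_flatten, List.mem_ofFn]
  aesop

theorem two_le_headI_sTup (d : ℕ) (m : Fin (d + 1) → ℕ) (u : Fin d → ℕ) :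
    2 ≤ (sTup d m u).headI := by
  cases d <;> simp [sTup, List.ofFn_succ]

theorem sum_sTup (d : ℕ) (m : Fin (d + 1) → ℕ) (u : Fin d → ℕ) (p : ℝ) :
    (sTup d m u).sum = (xPre d m u p).length + (m (Fin.last d) + 2) := by
  simp [sTup, xPre, List.sum_flatten, List.length_flatten, Function.comp_def, add_assoc, add_comm,
    add_left_comm]

theorem xPre_nonneg (d : ℕ) (m : Fin (d + 1) → ℕ) (u : Fin d → ℕ) {p : ℝ} (hp : p ≤ 1) :
    ∀ y ∈ xPre d m u p, 0 ≤ y := by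
  have hq : 0 ≤ 1 - p := sub_nonneg.2 hp
  simp only [xPre, List.mem_flatten, List.mem_ofFn]
  rintro y ⟨_, ⟨i, rfl⟩, hy⟩
  simp only [List.mem_cons, List.mem_append, List.mem_replicate] at hy
  rcases hy with rfl | ⟨_, rfl⟩ | rfl | ⟨_, rfl⟩
  exacts [hq, zero_le_one, one_div_nonneg.2 hq, zero_le_one]

/-- Multiple zeta-star values as differences of multiple polylogarithms. -/
theorem stmt_13 (d : ℕ) (m : Fin (d + 1) → ℕ) (u : Fin d → ℕ) (p : ℝ)
    (hp : p ∈ Set.Ioo (0 : ℝ) 1) :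
    LiStar (sTup d m u) (List.replicate (sTup d m u).length (1 : ℝ)) =
      LiStar (List.replicate (sTup d m u).sum 1)
          (xPre d m u p ++
            (1 - p) :: (List.replicate (m (Fin.last d)) (1 : ℝ) ++ [1 / (1 - p)])) -
        LiStar (List.replicate (sTup d m u).sum 1)
          (xPre d m u p ++ (1 - p) :: List.replicate (m (Fin.last d) + 1) (1 : ℝ)) := by
  have hq : 0 < 1 - p := sub_pos.2 hp.2
  set x : List ℝ := xPre d m u p ++ (1 - p) :: List.replicate (m (Fin.last d)) 1
  have hx : ∀ y ∈ x, 0 ≤ y := List.forall_mem_append.2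
    ⟨xPre_nonneg d m u hp.2.le, List.forall_mem_cons.2 ⟨hq.le, fun y hy => by
      rw [List.eq_of_mem_replicate hy]
      exact zero_le_one⟩⟩
  have hlast : xPre d m u p ++ (1 - p) :: (List.replicate (m (Fin.last d)) 1 ++ [1 / (1 - p)]) =
      x ++ [1 / (1 - p)] := by simp [x]
  have hlast_one : xPre d m u p ++ (1 - p) :: List.replicate (m (Fin.last d) + 1) 1 = x ++ [1] := by
    simp [x, List.replicate_succ']
  have hweight : (sTup d m u).sum = x.length + 1 := by
    simp [x, sum_sTup d m u p, add_assoc]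
  have hintertwined := eulerIntertwined_xPre_sTup d m u hq.ne'
  rw [hlast] at hintertwined
  rw [hweight, hlast, hlast_one]
  exact (LiStar_sub_LiStar_of_eulerIntertwined hp hx (two_le_headI_sTup d m u)
    (one_le_of_mem_sTup d m u) hintertwined).symm
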